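/- arXiv:1903.12243 — 2 statements merged into one kernel-verified Lean document; each statement's English description precedes it below -/
import Mathlib

section
/- Let V ⊆ F_q^n be a linear code with relative minimum distance λ. Let ε, δ > 0 with ε < 1/3 and δ < 1 - (1-λ+ε)^{1/3}. If u* ∈ F_q^n satisfies Δ(u*, V) > δ + ε (relative Hamming distance), then for every u ∈ F_q^n, there are at most 2/ε² values of x ∈ F_q such that Δ(u* + x·u, V) < δ. -/
open Finset
open scoped Classical

/-- Relative Hamming distance between two functions on a finite domain. -/
noncomputable def relDist {D F : Type*} [Fintype D] (u v : D → F) : ℝ :=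
  ((Finset.univ.filter (fun i => u i ≠ v i)).card : ℝ) / (Fintype.card D)

theorem agree_card {n : ℕ} (hn : 0 < n) {F : Type*} (a b : Fin n → F) :
    ((univ.filter (fun i => a i = b i)).card : ℝ) = (1 - relDist a b) * n := by
  have h := Finset.card_filter_add_card_filter_not (s := (univ : Finset (Fin n)))
    (fun i => a i = b i)
  have h2 : ((univ.filter (fun i => a i = b i)).card : ℝ)
      + ((univ.filter (fun i => ¬ a i = b i)).card : ℝ) = n := by
    have h3 := congrArg (Nat.cast : ℕ → ℝ) h
    simpa using h3
  have hn' : (n : ℝ) ≠ 0 := by positivity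
  unfold relDist
  rw [Fintype.card_fin, sub_mul, div_mul_cancel₀ _ hn', one_mul]
  simp only [ne_eq]
  linarith

theorem line_lemma {F : Type*} [Field F] [Fintype F] {n : ℕ} (hn : 0 < n) (ε δ : ℝ)
    (us u vs v : Fin n → F) (T : Finset F)
    (hfar : δ + ε < relDist us vs)
    (hT : ∀ x ∈ T, relDist (us + x • u) (vs + x • v) < δ) : (T.card : ℝ) * ε ≤ 1 := by
  have hn' : (0 : ℝ) < n := by positivity
  have h1 : (T.card : ℝ) * ((1 - δ) * n) ≤
      ∑ x ∈ T, ∑ i : Fin n, (if (us + x • u) i = (vs + x • v) i then (1 : ℝ) else 0) := by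
    rw [← nsmul_eq_mul]
    apply Finset.card_nsmul_le_sum
    intro x hx
    rw [Finset.sum_boole, agree_card hn]
    have := hT x hx
    gcongr
  rw [Finset.sum_comm] at h1
  have h2 : ∑ i : Fin n, ∑ x ∈ T, (if (us + x • u) i = (vs + x • v) i then (1 : ℝ) else 0)
      ≤ ∑ i : Fin n, ((T.card : ℝ) * (if us i = vs i then (1 : ℝ) else 0) + 1) := by
    apply Finset.sum_le_sum
    intro i _
    rw [Finset.sum_boole]
    by_cases hi : us i = vs i
    · have : ((T.filter (fun x => (us + x • u) i = (vs + x • v) i)).card : ℝ) ≤ T.card := by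
        exact_mod_cast Finset.card_filter_le _ _
      simp only [hi, if_true]
      linarith
    · have : (T.filter (fun x => (us + x • u) i = (vs + x • v) i)).card ≤ 1 := by
        rw [Finset.card_le_one]
        intro a ha b hb
        simp only [Finset.mem_filter, Pi.add_apply, Pi.smul_apply, smul_eq_mul] at ha hb
        by_contra hab
        have e : (a - b) * (u i - v i) = 0 := by linear_combination ha.2 - hb.2
        rcases mul_eq_zero.1 e with e | e
        · exact hab (sub_eq_zero.1 e)
        · apply hi
          linear_combination ha.2 - a * e
      have : ((T.filter (fun x => (us + x • u) i = (vs + x • v) i)).card : ℝ) ≤ 1 := by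
        exact_mod_cast this
      simp only [hi, if_false]
      linarith
  rw [Finset.sum_add_distrib, ← Finset.mul_sum, Finset.sum_boole, agree_card hn] at h2
  simp only [Finset.sum_const, Finset.card_univ, Fintype.card_fin, nsmul_eq_mul, mul_one] at h2
  have h3 : (T.card : ℝ) * ((1 - relDist us vs) * n) ≤ (T.card : ℝ) * ((1 - (δ + ε)) * n) := by
    gcongr
  have h4 : ((T.card : ℝ) * ε) * n ≤ 1 * n := by nlinarith
  exact le_of_mul_le_mul_right h4 hn'

theorem collinear_lemma {F : Type*} [Field F] [Fintype F] {n : ℕ} (hn : 0 < n)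
    (V : Submodule F (Fin n → F)) (lam : ℝ)
    (hlam : ∀ v ∈ V, ∀ v' ∈ V, v ≠ v' → lam ≤ relDist v v')
    (us u vx vy vz : Fin n → F) (hx : vx ∈ V) (hy : vy ∈ V) (hz : vz ∈ V)
    (x y z : F) (hxy : x ≠ y)
    (h : (1 - lam) * n < ((univ.filter (fun i => (us + x • u) i = vx i ∧ (us + y • u) i = vy i ∧
      (us + z • u) i = vz i)).card : ℝ)) :
    vz = (vx - x • ((x - y)⁻¹ • (vx - vy))) + z • ((x - y)⁻¹ • (vx - vy)) := by
  have hv : (x - y)⁻¹ • (vx - vy) ∈ V := V.smul_mem _ (V.sub_mem hx hy)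
  by_contra hne
  have h1 := hlam _ hz _ (V.add_mem (V.sub_mem hx (V.smul_mem x hv)) (V.smul_mem z hv)) hne
  have h2 := agree_card hn vz
    ((vx - x • ((x - y)⁻¹ • (vx - vy))) + z • ((x - y)⁻¹ • (vx - vy)))
  have h3 : (univ.filter (fun i => (us + x • u) i = vx i ∧ (us + y • u) i = vy i ∧
      (us + z • u) i = vz i)).card ≤ (univ.filter (fun i => vz i =
    ((vx - x • ((x - y)⁻¹ • (vx - vy))) + z • ((x - y)⁻¹ • (vx - vy))) i)).card := by
    apply Finset.card_le_card
    intro i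
    simp only [Finset.mem_filter, Finset.mem_univ, true_and, Pi.add_apply, Pi.smul_apply,
      Pi.sub_apply, smul_eq_mul]
    rintro ⟨e1, e2, e3⟩
    have hs : x - y ≠ 0 := sub_ne_zero.2 hxy
    have : (x - y)⁻¹ * (vx i - vy i) = u i := by
      rw [inv_mul_eq_iff_eq_mul₀ hs, ← e1, ← e2]; ring
    rw [this, ← e1, ← e3]; ring
  have h3' : ((univ.filter (fun i => (us + x • u) i = vx i ∧ (us + y • u) i = vy i ∧
      (us + z • u) i = vz i)).card : ℝ) ≤ _ := Nat.cast_le.2 h3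
  rw [h2] at h3'
  have hn' : (0 : ℝ) < n := by positivity
  nlinarith

theorem ite_mul_three (p q r : Prop) : (if p then (1 : ℝ) else 0) *
    ((if q then (1 : ℝ) else 0) * (if r then (1 : ℝ) else 0)) = if p ∧ q ∧ r then 1 else 0 := by
  by_cases hp : p <;> by_cases hq : q <;> by_cases hr : r <;> simp [hp, hq, hr]

theorem stmt0 {F : Type*} [Field F] [Fintype F] {n : ℕ} (hn : 0 < n)
    (V : Submodule F (Fin n → F)) (lam ε δ : ℝ)
    (hlam : ∀ v ∈ V, ∀ v' ∈ V, v ≠ v' → lam ≤ relDist v v')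
    (hε : 0 < ε) (hε3 : ε < 1/3) (hδ0 : 0 < δ)
    (hδ : δ < 1 - (1 - lam + ε) ^ ((1:ℝ)/3))
    (ustar : Fin n → F)
    (hfar : ∀ v ∈ V, δ + ε < relDist ustar v)
    (u : Fin n → F) :
    (({x : F | ∃ v ∈ V, relDist (ustar + x • u) v < δ} : Set F).ncard : ℝ) ≤ 2 / ε ^ 2 := by
  have hn' : (0 : ℝ) < n := by positivity
  obtain ⟨A, hA⟩ : ∃ A : Finset F, A = univ.filter
    (fun x => ∃ v ∈ V, relDist (ustar + x • u) v < δ) := ⟨_, rfl⟩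
  have hset : ({x : F | ∃ v ∈ V, relDist (ustar + x • u) v < δ} : Set F) = (A : Set F) := by
    ext x; simp [hA]
  rw [hset, Set.ncard_coe_finset]
  have hmem : ∀ x, x ∈ A → ∃ v ∈ V, relDist (ustar + x • u) v < δ := by
    intro x hx; rw [hA] at hx; simpa using hx
  clear hset hA
  have hgoal : (A.card : ℝ) ≤ 1 / ε + 1 / ε ^ 2 → (A.card : ℝ) ≤ 2 / ε ^ 2 := by
    intro h
    have : 1 / ε ≤ 1 / ε ^ 2 := by
      apply one_div_le_one_div_of_le (by positivity); nlinarith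
    have e : 2 / ε ^ 2 = 1 / ε ^ 2 + 1 / ε ^ 2 := by ring
    linarith
  apply hgoal
  have hε2 : 0 < 1 / ε ^ 2 := by positivity
  rcases lt_or_ge 1 lam with hl | hl
  · have hV : ∀ v ∈ V, v = 0 := by
      intro v hv
      by_contra hne
      have h1 := hlam v hv 0 V.zero_mem hne
      have h2 := agree_card hn v 0
      have h3 : (0 : ℝ) ≤ (1 - relDist v 0) * n := h2 ▸ Nat.cast_nonneg _
      nlinarith
    have := line_lemma hn ε δ ustar u 0 0 A (hfar 0 V.zero_mem) (by
      intro x hx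
      obtain ⟨v, hv, h⟩ := hmem x hx
      rw [hV v hv] at h
      simpa using h)
    have : (A.card : ℝ) ≤ 1 / ε := by rwa [le_div_iff₀ hε]
    linarith
  choose! w hwV hw using hmem
  have hbase : 0 ≤ 1 - lam + ε := by linarith
  have hr0 : 0 ≤ (1 - lam + ε) ^ ((1:ℝ)/3) := Real.rpow_nonneg hbase _
  have hr3 : ((1 - lam + ε) ^ ((1:ℝ)/3)) ^ 3 = 1 - lam + ε := by
    rw [← Real.rpow_natCast, ← Real.rpow_mul hbase]; norm_num
  have hδ3 : 1 - lam + ε ≤ (1 - δ) ^ 3 := by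
    rw [← hr3]
    apply pow_le_pow_left₀ hr0; linarith
  have hδ1 : 0 ≤ 1 - δ := by linarith
  -- indicators
  obtain ⟨a, ha⟩ : ∃ a : Fin n → F → ℝ,
    a = fun i x => if (ustar + x • u) i = w x i then (1 : ℝ) else 0 := ⟨_, rfl⟩
  set N : ℝ := (A.card : ℝ) with hN
  have hN0 : 0 ≤ N := by positivity
  have hc1 : N * ((1 - δ) * n) ≤ ∑ i : Fin n, ∑ x ∈ A, a i x := by
    rw [Finset.sum_comm, hN, ← nsmul_eq_mul]
    apply Finset.card_nsmul_le_sum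
    intro x hx
    rw [ha]
    simp only []
    rw [Finset.sum_boole, agree_card hn]
    have := hw x hx
    gcongr
  have hcube : n * ((1 - δ) * N) ^ 3 ≤ ∑ i : Fin n, (∑ x ∈ A, a i x) ^ 3 := by
    have ht : 0 ≤ (1 - δ) * N := by positivity
    have hs : ∑ i : Fin n, (3 * ((1 - δ) * N) ^ 2 * (∑ x ∈ A, a i x) - 2 * ((1 - δ) * N) ^ 3)
        ≤ ∑ i : Fin n, (∑ x ∈ A, a i x) ^ 3 := by
      apply Finset.sum_le_sum
      intro i _
      have hc : 0 ≤ ∑ x ∈ A, a i x := by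
        apply Finset.sum_nonneg
        intro x _
        rw [ha]; simp only []; split_ifs <;> norm_num
      generalize (∑ x ∈ A, a i x) = c at hc
      generalize (1 - δ) * N = t at ht
      have : 0 ≤ (c - t) ^ 2 * (c + 2 * t) := by positivity
      nlinarith
    rw [Finset.sum_sub_distrib, ← Finset.mul_sum] at hs
    simp only [Finset.sum_const, Finset.card_univ, Fintype.card_fin, nsmul_eq_mul] at hs
    have := mul_le_mul_of_nonneg_left hc1 (by positivity : 0 ≤ 3 * ((1 - δ) * N) ^ 2)
    nlinarith
  have hexp : ∑ i : Fin n, (∑ x ∈ A, a i x) ^ 3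
      = ∑ x ∈ A, ∑ y ∈ A, ∑ z ∈ A, ∑ i : Fin n, a i x * (a i y * a i z) := by
    have : ∀ i : Fin n, (∑ x ∈ A, a i x) ^ 3
        = ∑ x ∈ A, ∑ y ∈ A, ∑ z ∈ A, a i x * (a i y * a i z) := by
      intro i
      rw [pow_succ', pow_two, Finset.sum_mul_sum, Finset.sum_mul]
      simp only [Finset.mul_sum]
    simp only [this]
    rw [Finset.sum_comm]
    refine Finset.sum_congr rfl fun x _ => ?_
    rw [Finset.sum_comm]
    refine Finset.sum_congr rfl fun y _ => ?_
    rw [Finset.sum_comm]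
  have hI : ∀ x y z, ∑ i : Fin n, a i x * (a i y * a i z) =
      ((univ.filter (fun i => (ustar + x • u) i = w x i ∧ (ustar + y • u) i = w y i ∧
      (ustar + z • u) i = w z i)).card : ℝ) := by
    intro x y z
    rw [← Finset.sum_boole, ha]
    refine Finset.sum_congr rfl fun i _ => ?_
    simp only []
    exact ite_mul_three _ _ _
  have hIn : ∀ x y z, ∑ i : Fin n, a i x * (a i y * a i z) ≤ n := by
    intro x y z
    rw [hI]
    have := Finset.card_le_univ (univ.filter (fun i => (ustar + x • u) i = w x i ∧
      (ustar + y • u) i = w y i ∧ (ustar + z • u) i = w z i))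
    rw [Fintype.card_fin] at this
    exact_mod_cast this
  have hxy : ∀ x ∈ A, ∀ y ∈ A, ∑ z ∈ A, ∑ i : Fin n, a i x * (a i y * a i z)
      ≤ N * ((1 - lam) * n) + n * ((if x = y then N else 0) + 1 / ε) := by
    intro x hx y hy
    have h1 : ∑ z ∈ A, ∑ i : Fin n, a i x * (a i y * a i z) ≤ ∑ z ∈ A, ((1 - lam) * n +
        n * (if (1 - lam) * n < ∑ i : Fin n, a i x * (a i y * a i z) then (1 : ℝ) else 0)) := by
      apply Finset.sum_le_sum
      intro z _
      split_ifs with h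
      · have := hIn x y z
        have : 0 ≤ (1 - lam) * n := mul_nonneg (by linarith) hn'.le
        linarith
      · linarith
    rw [Finset.sum_add_distrib, Finset.sum_const, ← Finset.mul_sum, Finset.sum_boole,
      nsmul_eq_mul] at h1
    refine h1.trans ?_
    have h2 : ((A.filter (fun z => (1 - lam) * n <
        ∑ i : Fin n, a i x * (a i y * a i z))).card : ℝ) ≤ (if x = y then N else 0) + 1 / ε := by
      split_ifs with h
      · have : ((A.filter (fun z => (1 - lam) * n <
          ∑ i : Fin n, a i x * (a i y * a i z))).card : ℝ) ≤ N := by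
          rw [hN]; exact_mod_cast Finset.card_filter_le _ _
        have : 0 < 1 / ε := by positivity
        linarith
      · rw [zero_add, le_div_iff₀ hε]
        have hv : (x - y)⁻¹ • (w x - w y) ∈ V :=
          V.smul_mem _ (V.sub_mem (hwV x hx) (hwV y hy))
        apply line_lemma hn ε δ ustar u (w x - x • ((x - y)⁻¹ • (w x - w y)))
          ((x - y)⁻¹ • (w x - w y)) _ (hfar _ (V.sub_mem (hwV x hx) (V.smul_mem x hv)))
        intro z hz
        rw [Finset.mem_filter, hI] at hz
        rw [← collinear_lemma hn V lam hlam ustar u (w x) (w y) (w z) (hwV x hx) (hwV y hy)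
          (hwV z hz.1) x y z h hz.2]
        exact hw z hz.1
    gcongr
  have htot : ∑ x ∈ A, ∑ y ∈ A, ∑ z ∈ A, ∑ i : Fin n, a i x * (a i y * a i z)
      ≤ ∑ x ∈ A, ∑ y ∈ A, (N * ((1 - lam) * n) + n * ((if x = y then N else 0) + 1 / ε)) :=
    Finset.sum_le_sum fun x hx => Finset.sum_le_sum fun y hy => hxy x hx y hy
  have hrhs : ∑ x ∈ A, ∑ y ∈ A, (N * ((1 - lam) * n) + n * ((if x = y then N else 0) + 1 / ε))
      = N * (N * (N * ((1 - lam) * n) + n * (1 / ε)) + n * N) := by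
    have : ∀ x ∈ A, ∑ y ∈ A, (N * ((1 - lam) * n) + n * ((if x = y then N else 0) + 1 / ε))
        = N * (N * ((1 - lam) * n) + n * (1 / ε)) + n * N := by
      intro x hx
      rw [Finset.sum_add_distrib, Finset.sum_const, ← Finset.mul_sum, Finset.sum_add_distrib,
        Finset.sum_ite_eq]
      simp only [hx, if_true, Finset.sum_const, nsmul_eq_mul, ← hN]
      ring
    rw [Finset.sum_congr rfl this, Finset.sum_const, nsmul_eq_mul, ← hN]
  rw [hrhs, ← hexp] at htot
  have h5 := hcube.trans htot
  rcases hN0.eq_or_lt with h0 | hpos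
  · rw [← h0]; positivity
  have h6 : n * ((1 - lam + ε) * N ^ 3) ≤ n * ((1 - δ) * N) ^ 3 := by
    rw [mul_pow]; gcongr
  have h7 : (n * N ^ 2) * (ε * N) ≤ (n * N ^ 2) * (1 + 1 / ε) := by nlinarith
  have h8 := le_of_mul_le_mul_left h7 (by positivity)
  have h9 : N ≤ (1 + 1 / ε) / ε := by rw [le_div_iff₀ hε]; linarith
  have e : (1 + 1 / ε) / ε = 1 / ε + 1 / ε ^ 2 := by field_simp
  linarith
end

section
/- Let V = RS[F_q, D, d] be the Reed-Solomon code of evaluations on D ⊆ F_q of polynomials of degree < d. For z, b ∈ F_q, let V_{z,b} = {Q|_D : deg(Q) < d, Q(z) = b}. Let L*_δ be the maximum over u of |List(u, V, δ)|. Let u, u* ∈ F_q^D, and for each z let B_z(X) ∈ F_q[X] be a linear (degree ≤ 1) polynomial. Suppose for some 0 < ε < 1/3: Pr_{x,z ∈ F_q}[Δ(u* + x·u, V_{z, B_z(x)}) < δ] ≥ max(2·L*_δ·(d/q + ε)^{1/3}, 4/(ε²q)). Then there exist v, v* ∈ V and C ⊆ D with |C| ≥ (1-δ-ε)|D| such that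 u agrees with v on C and u* agrees with v* on C; consequently Δ(u, V) ≤ δ + ε and Δ(u*, V) ≤ δ + ε. -/
open Finset Polynomial
open scoped Classical

theorem rs_count {F : Type*} [Field F] [Fintype F] (G : F → Finset F) :
    ∑ z : F, (∑ x : F, (if z ∈ G x then (1:ℝ) else 0)) ^ 3
      = ∑ x₁ : F, ∑ x₂ : F, ∑ x₃ : F, ((G x₁ ∩ G x₂ ∩ G x₃).card : ℝ) := by
  have h1 : ∀ z : F, (∑ x : F, (if z ∈ G x then (1:ℝ) else 0)) ^ 3
      = ∑ x₁ : F, ∑ x₂ : F, ∑ x₃ : F, (if z ∈ G x₁ ∩ G x₂ ∩ G x₃ then (1:ℝ) else 0) := by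
    intro z
    rw [pow_three, Finset.sum_mul_sum, Finset.sum_mul_sum]
    refine Finset.sum_congr rfl fun x₁ _ => Finset.sum_congr rfl fun x₂ _ => ?_
    rw [Finset.mul_sum]
    refine Finset.sum_congr rfl fun x₃ _ => ?_
    by_cases a : z ∈ G x₁ <;> by_cases b : z ∈ G x₂ <;> by_cases c : z ∈ G x₃ <;> simp [a, b, c]
  simp_rw [h1]
  rw [Finset.sum_comm]
  refine Finset.sum_congr rfl fun x₁ _ => ?_
  rw [Finset.sum_comm]
  refine Finset.sum_congr rfl fun x₂ _ => ?_
  rw [Finset.sum_comm]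
  refine Finset.sum_congr rfl fun x₃ _ => ?_
  simp only [Finset.sum_boole, Finset.filter_univ_mem]

theorem rs_roots {F : Type*} [Field F] [Fintype F] (d : ℕ) (p : Polynomial F)
    (hp : p ∈ Polynomial.degreeLT F d) (hp0 : p ≠ 0) (s : Finset F)
    (hs : ∀ z ∈ s, p.eval z = 0) : s.card ≤ d := by
  by_contra h
  apply hp0
  refine Polynomial.eq_zero_of_degree_lt_of_eval_finset_eq_zero s ?_ hs
  rw [Polynomial.mem_degreeLT] at hp
  refine hp.trans ?_
  exact_mod_cast not_le.mp h

theorem rs_line {F : Type*} [Field F] (p : Polynomial F) (hp : p.degree ≤ 1) (x₁ x₂ x₃ : F) :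
    (x₁ - x₂) * p.eval x₃ = (x₃ - x₂) * p.eval x₁ + (x₁ - x₃) * p.eval x₂ := by
  rw [Polynomial.eq_X_add_C_of_degree_le_one hp]
  simp
  ring

theorem rs_collinear {F : Type*} [Field F] [Fintype F] (d : ℕ) (hd : 0 < d) (ε : ℝ) (hε : 0 < ε)
    (B : F → Polynomial F) (hB : ∀ z, (B z).degree ≤ 1)
    (P : F → Polynomial F) (hP : ∀ x, P x ∈ Polynomial.degreeLT F d)
    (G : F → Finset F) (hG : ∀ x, ∀ z ∈ G x, (P x).eval z = (B z).eval x)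
    (hT : 8 * ((d / Fintype.card F : ℝ) + ε) * (Fintype.card F : ℝ) ^ 4
      ≤ ∑ z : F, (∑ x : F, (if z ∈ G x then (1:ℝ) else 0)) ^ 3) :
    ∃ Q Q' : Polynomial F, Q ∈ Polynomial.degreeLT F d ∧ Q' ∈ Polynomial.degreeLT F d ∧
      ∃ S : Finset F, ε * Fintype.card F ≤ (S.card : ℝ) ∧
        ∀ x ∈ S, (G x).Nonempty ∧ P x = Q' + C x * Q := by
  have hq : (0:ℝ) < Fintype.card F := by exact_mod_cast Fintype.card_pos
  set q : ℝ := (Fintype.card F : ℝ) with hqdef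
  rw [rs_count] at hT
  let col : F → F → F → Prop := fun x₁ x₂ x₃ =>
    C (x₁ - x₂) * P x₃ = C (x₃ - x₂) * P x₁ + C (x₁ - x₃) * P x₂
  let S : F → F → Finset F := fun x₁ x₂ =>
    Finset.univ.filter fun x₃ => (G x₃).Nonempty ∧ col x₁ x₂ x₃
  have key : ∃ x₁ x₂ : F, x₁ ≠ x₂ ∧ ε * q ≤ ((S x₁ x₂).card : ℝ) := by
    by_contra hcon
    push Not at hcon
    have hm : ∀ x₁ x₂ x₃ : F, ((G x₁ ∩ G x₂ ∩ G x₃).card : ℝ) ≤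
        (if x₁ = x₂ then q else 0) + d + (if x₁ ≠ x₂ ∧ x₃ ∈ S x₁ x₂ then q else 0) := by
      intro x₁ x₂ x₃
      have hle : ((G x₁ ∩ G x₂ ∩ G x₃).card : ℝ) ≤ q := by
        rw [hqdef]; exact_mod_cast Finset.card_le_univ _
      have hd0 : (0:ℝ) ≤ d := by positivity
      by_cases h12 : x₁ = x₂
      · simp only [h12, if_true, ne_eq, not_true_eq_false, false_and, if_false] at hle ⊢
        linarith
      by_cases h3 : x₃ ∈ S x₁ x₂
      · simp only [h12, h3, ne_eq, not_false_eq_true, and_self, if_true, if_false]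
        linarith
      simp only [h12, h3, if_false, and_false]
      have : (G x₁ ∩ G x₂ ∩ G x₃).card ≤ d := by
        by_cases hne : (G x₃).Nonempty
        · have hc : ¬ col x₁ x₂ x₃ := fun hc => h3 (by simp [S, hne, hc])
          refine rs_roots d (C (x₁ - x₂) * P x₃ - (C (x₃ - x₂) * P x₁ + C (x₁ - x₃) * P x₂)) ?_
            (sub_ne_zero.mpr hc) _ ?_
          · simp only [← Polynomial.smul_eq_C_mul]
            exact Submodule.sub_mem _ (Submodule.smul_mem _ _ (hP _))
              (Submodule.add_mem _ (Submodule.smul_mem _ _ (hP _)) (Submodule.smul_mem _ _ (hP _)))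
          · intro z hz
            simp only [Finset.mem_inter] at hz
            simp only [eval_sub, eval_add, eval_mul, eval_C, hG _ _ hz.1.1, hG _ _ hz.1.2,
              hG _ _ hz.2]
            rw [rs_line _ (hB z) x₁ x₂ x₃, sub_self]
        · rw [Finset.not_nonempty_iff_eq_empty] at hne
          simp [hne]
      have : ((G x₁ ∩ G x₂ ∩ G x₃).card : ℝ) ≤ d := by exact_mod_cast this
      linarith
    have h3 : ∀ x₁ x₂ : F, ∑ x₃ : F, ((G x₁ ∩ G x₂ ∩ G x₃).card : ℝ) ≤
        (if x₁ = x₂ then q * q else 0) + q * d + q * (ε * q) := by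
      intro x₁ x₂
      refine (Finset.sum_le_sum fun x₃ _ => hm x₁ x₂ x₃).trans ?_
      rw [Finset.sum_add_distrib, Finset.sum_const, Finset.card_univ, nsmul_eq_mul, ← hqdef]
      by_cases h12 : x₁ = x₂
      · simp only [h12, if_true, ne_eq, not_true_eq_false, false_and, if_false,
          Finset.sum_const_zero]
        have : 0 ≤ q * (ε * q) := by positivity
        linarith
      · simp only [h12, ne_eq, not_false_eq_true, true_and, if_false]
        rw [← Finset.sum_filter, Finset.sum_const, Finset.filter_univ_mem, nsmul_eq_mul]
        have := hcon x₁ x₂ h12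
        nlinarith
    have h4 : ∑ x₁ : F, ∑ x₂ : F, ∑ x₃ : F, ((G x₁ ∩ G x₂ ∩ G x₃).card : ℝ) ≤
        q * (q * q + q * (q * d + q * (ε * q))) := by
      have : ∀ x₁ : F, ∑ x₂ : F, ∑ x₃ : F, ((G x₁ ∩ G x₂ ∩ G x₃).card : ℝ) ≤
          q * q + q * (q * d + q * (ε * q)) := by
        intro x₁
        refine (Finset.sum_le_sum fun x₂ _ => h3 x₁ x₂).trans ?_
        simp only [add_assoc]
        rw [Finset.sum_add_distrib, Finset.sum_const, Finset.card_univ, nsmul_eq_mul, ← hqdef]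
        simp
      refine (Finset.sum_le_sum fun x₁ _ => this x₁).trans ?_
      rw [Finset.sum_const, Finset.card_univ, nsmul_eq_mul, ← hqdef]
    have h5 : 8 * ((d / q : ℝ) + ε) * q ^ 4 = 8 * d * q ^ 3 + 8 * ε * q ^ 4 := by
      field_simp
    have h6 : (1:ℝ) ≤ d := by exact_mod_cast hd
    have h7 : (0:ℝ) < q ^ 3 := by positivity
    have h8 : (0:ℝ) < ε * q ^ 4 := by positivity
    nlinarith
  obtain ⟨x₁, x₂, hne, hS⟩ := key
  have hne' : x₁ - x₂ ≠ 0 := sub_ne_zero.mpr hne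
  have hQ : C ((x₁ - x₂)⁻¹) * (P x₁ - P x₂) ∈ Polynomial.degreeLT F d := by
    rw [← Polynomial.smul_eq_C_mul]
    exact Submodule.smul_mem _ _ (Submodule.sub_mem _ (hP _) (hP _))
  refine ⟨C ((x₁ - x₂)⁻¹) * (P x₁ - P x₂), P x₁ - C x₁ * (C ((x₁ - x₂)⁻¹) * (P x₁ - P x₂)), hQ,
    ?_, S x₁ x₂, hS, ?_⟩
  · refine Submodule.sub_mem _ (hP _) ?_
    rw [← Polynomial.smul_eq_C_mul x₁]
    exact Submodule.smul_mem _ _ hQ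
  · intro x hx
    simp only [S, Finset.mem_filter, Finset.mem_univ, true_and] at hx
    refine ⟨hx.1, ?_⟩
    have hc : C (x₁ - x₂) * P x = C (x - x₂) * P x₁ + C (x₁ - x) * P x₂ := hx.2
    have hi : C ((x₁ - x₂)⁻¹) * C (x₁ - x₂) = (1 : Polynomial F) := by
      rw [← C_mul, inv_mul_cancel₀ hne', C_1]
    calc P x = C ((x₁ - x₂)⁻¹) * (C (x₁ - x₂) * P x) := by rw [← mul_assoc, hi, one_mul]
      _ = (C ((x₁ - x₂)⁻¹) * C (x₁ - x₂)) * P x₁ 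
          + (C x - C x₁) * (C ((x₁ - x₂)⁻¹) * (P x₁ - P x₂)) := by
          rw [hc]; simp only [C_sub]; ring
      _ = _ := by rw [hi]; ring

theorem rs_agree {F : Type*} [Field F] [Fintype F] (D : Finset F) (hD : D.Nonempty)
    (δ ε : ℝ) (u u' v v' : ↥D → F) (S : Finset F) (hS : 1 ≤ ε * S.card)
    (h : ∀ x ∈ S, relDist (fun y => u' y + x * u y) (fun y => v' y + x * v y) < δ) :
    (1 - δ - ε) * D.card ≤
      ((Finset.univ.filter fun y : ↥D => u y = v y ∧ u' y = v' y).card : ℝ) := by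
  have hn : (0:ℝ) < D.card := by exact_mod_cast hD.card_pos
  set A := Finset.univ.filter fun y : ↥D => u y = v y ∧ u' y = v' y with hA
  have hs0 : (0:ℝ) < S.card := by
    rcases Nat.eq_zero_or_pos S.card with h0 | h0
    · rw [h0] at hS; norm_num at hS
    · exact_mod_cast h0
  -- lower bound
  have h1 : ∑ x ∈ S, ∑ y : ↥D, (if u' y + x * u y = v' y + x * v y then (0:ℝ) else 1)
      ≤ S.card * (δ * D.card) := by
    rw [← nsmul_eq_mul, ← Finset.sum_const]
    refine Finset.sum_le_sum fun x hx => ?_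
    have := h x hx
    unfold relDist at this
    rw [div_lt_iff₀ (by simpa using hn), Fintype.card_coe] at this
    refine le_trans (le_of_eq ?_) this.le
    rw [← Finset.sum_boole]
    refine Finset.sum_congr rfl fun y _ => ?_
    by_cases hh : u' y + x * u y = v' y + x * v y <;> simp [hh]
  have h2 : ∑ y : ↥D, (if y ∈ A then (0:ℝ) else S.card - 1) ≤
      ∑ x ∈ S, ∑ y : ↥D, (if u' y + x * u y = v' y + x * v y then (0:ℝ) else 1) := by
    rw [Finset.sum_comm]
    refine Finset.sum_le_sum fun y _ => ?_
    by_cases hy : y ∈ A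
    · simp only [hy, if_true]
      exact Finset.sum_nonneg fun x _ => by split_ifs <;> norm_num
    · simp only [hy, if_false]
      have hc : (S.filter fun x => u' y + x * u y = v' y + x * v y).card ≤ 1 := by
        rw [Finset.card_le_one]
        intro a ha b hb
        simp only [Finset.mem_filter] at ha hb
        by_contra hab
        apply hy
        have e1 : (a - b) * (u y - v y) = 0 := by linear_combination ha.2 - hb.2
        have e2 : u y = v y := by
          rcases mul_eq_zero.mp e1 with h | h
          · exact absurd (sub_eq_zero.mp h) hab
          · exact sub_eq_zero.mp h
        have e3 : u' y = v' y := by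
          have := ha.2
          rw [e2] at this
          exact add_right_cancel this
        simp [hA, e2, e3]
      have he : ∑ x ∈ S, (if u' y + x * u y = v' y + x * v y then (0:ℝ) else 1)
          = S.card - (S.filter fun x => u' y + x * u y = v' y + x * v y).card := by
        rw [← Finset.sum_boole, Finset.card_eq_sum_ones, Nat.cast_sum, ← Finset.sum_sub_distrib]
        refine Finset.sum_congr rfl fun x _ => ?_
        split_ifs <;> simp
      rw [he]
      have : ((S.filter fun x => u' y + x * u y = v' y + x * v y).card : ℝ) ≤ 1 := by
        exact_mod_cast hc
      linarith
  have h3 : ∑ y : ↥D, (if y ∈ A then (0:ℝ) else S.card - 1)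
      = (D.card - A.card) * (S.card - 1) := by
    have : ∀ y : ↥D, (if y ∈ A then (0:ℝ) else S.card - 1) =
        (S.card - 1) - (if y ∈ A then ((S.card:ℝ) - 1) else 0) := by
      intro y; split_ifs <;> simp
    simp_rw [this]
    rw [Finset.sum_sub_distrib, ← Finset.sum_filter, Finset.sum_const, Finset.sum_const,
      Finset.filter_univ_mem, Finset.card_univ, Fintype.card_coe, nsmul_eq_mul, nsmul_eq_mul]
    ring
  have h4 : ((D.card:ℝ) - A.card) * (S.card - 1) ≤ S.card * (δ * D.card) := by
    rw [← h3]; exact h2.trans h1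
  have hA0 : (0:ℝ) ≤ A.card := by positivity
  have h5 : ((1 - δ - ε) * D.card) * S.card ≤ A.card * S.card := by
    nlinarith
  exact le_of_mul_le_mul_right h5 hs0

theorem rs_dist {F : Type*} (D : Finset F) (hD : D.Nonempty) (η : ℝ) (u v : ↥D → F)
    (A : Finset ↥D) (hA : (1 - η) * D.card ≤ (A.card : ℝ)) (h : ∀ y ∈ A, u y = v y) :
    relDist u v ≤ η := by
  have hn : (0:ℝ) < D.card := by exact_mod_cast hD.card_pos
  unfold relDist
  rw [Fintype.card_coe, div_le_iff₀ hn]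
  have h1 : (Finset.univ.filter fun y => u y ≠ v y) ⊆ Aᶜ := by
    intro y hy
    simp only [Finset.mem_filter, Finset.mem_univ, true_and, Finset.mem_compl] at hy ⊢
    exact fun hh => hy (h y hh)
  have h2 := Finset.card_le_card h1
  have h3 := Finset.card_compl_add_card A
  rw [Fintype.card_coe] at h3
  have h4 : ((Finset.univ.filter fun y => u y ≠ v y).card : ℝ) + A.card ≤ D.card := by
    have h5 : (Finset.univ.filter fun y => u y ≠ v y).card + A.card ≤ D.card := by omega
    exact_mod_cast h5
  linarith

theorem rs_interp {F : Type*} [Field F] (D : Finset F) (d : ℕ) (h : D.card ≤ d) (u : ↥D → F) :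
    ∃ Q : Polynomial F, Q.degree < (d : ℕ) ∧ ∀ y : ↥D, u y = Q.eval (y : F) := by
  refine ⟨Lagrange.interpolate D id (fun a => if ha : a ∈ D then u ⟨a, ha⟩ else 0), ?_, ?_⟩
  · refine lt_of_lt_of_le (Lagrange.degree_interpolate_lt _ (Set.injOn_id _)) ?_
    exact_mod_cast h
  · intro y
    have := Lagrange.eval_interpolate_at_node (s := D) (v := id)
      (fun a => if ha : a ∈ D then u ⟨a, ha⟩ else 0) (Set.injOn_id _) y.2
    simp only [id] at this
    rw [this]
    simp

/-- choose the most popular codeword of the list of `w` -/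
theorem rs_choose {F : Type*} [Field F] [Fintype F] (D : Finset F)
    (d : ℕ) (hdD : d ≤ D.card) (δ : ℝ) (Lstar : ℝ) (w : ↥D → F)
    (hL : (({v : ↥D → F |
          (∃ Q : Polynomial F, Q.degree < (d : ℕ) ∧ ∀ y : ↥D, v y = Q.eval (y : F)) ∧
          relDist w v < δ}).ncard : ℝ) ≤ Lstar) (b : F → F) :
    ∃ P : Polynomial F, P ∈ Polynomial.degreeLT F d ∧
      ((Finset.univ.filter fun z => ∃ Q : Polynomial F, Q.degree < (d : ℕ) ∧
            Q.eval z = b z ∧ relDist w (fun y : ↥D => Q.eval (y : F)) < δ).card : ℝ)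
      ≤ Lstar * ((Finset.univ.filter fun z => P.eval z = b z ∧
        relDist w (fun y : ↥D => P.eval (y : F)) < δ).card : ℝ) := by
  set Λ : Finset (↥D → F) := Finset.univ.filter fun v =>
    (∃ Q : Polynomial F, Q.degree < (d : ℕ) ∧ ∀ y : ↥D, v y = Q.eval (y : F)) ∧
          relDist w v < δ with hΛ
  have hΛL : (Λ.card : ℝ) ≤ Lstar := by
    rw [← Set.ncard_coe_finset] 
    convert hL using 3
    simp [hΛ]
  set E := Finset.univ.filter fun z => ∃ Q : Polynomial F, Q.degree < (d : ℕ) ∧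
            Q.eval z = b z ∧ relDist w (fun y : ↥D => Q.eval (y : F)) < δ with hE
  by_cases hE0 : E = ∅
  · refine ⟨0, Submodule.zero_mem _, ?_⟩
    rw [hE0]
    have : 0 ≤ Lstar := le_trans (by positivity) hΛL
    simp only [Finset.card_empty, Nat.cast_zero]
    positivity
  have hex : ∀ v : ↥D → F, ∃ Q : Polynomial F, Q.degree < (d : ℕ) ∧
      (v ∈ Λ → ∀ y : ↥D, v y = Q.eval (y : F)) := by
    intro v
    by_cases hv : v ∈ Λ
    · obtain ⟨Q, h1, h2⟩ := (Finset.mem_filter.mp hv).2.1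
      exact ⟨Q, h1, fun _ => h2⟩
    · exact ⟨0, by simp, fun h => absurd h hv⟩
  choose R hR1 hR2 using hex
  let H : (↥D → F) → Finset F := fun v => Finset.univ.filter fun z => (R v).eval z = b z ∧
        relDist w (fun y : ↥D => (R v).eval (y : F)) < δ
  have hsub : E ⊆ Λ.biUnion H := by
    intro z hz
    obtain ⟨Q, hQ1, hQ2, hQ3⟩ := (Finset.mem_filter.mp hz).2
    have hmem : (fun y : ↥D => Q.eval (y : F)) ∈ Λ := by
      simp only [hΛ, Finset.mem_filter, Finset.mem_univ, true_and]
      exact ⟨⟨Q, hQ1, fun _ => rfl⟩, hQ3⟩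
    have hRQ : R (fun y : ↥D => Q.eval (y : F)) = Q := by
      refine Polynomial.eq_of_degrees_lt_of_eval_finset_eq D ?_ ?_ ?_
      · exact (hR1 _).trans_le (by exact_mod_cast hdD)
      · exact hQ1.trans_le (by exact_mod_cast hdD)
      · intro y hy
        exact (hR2 _ hmem ⟨y, hy⟩).symm
    refine Finset.mem_biUnion.mpr ⟨_, hmem, ?_⟩
    simp only [H, Finset.mem_filter, Finset.mem_univ, true_and, hRQ]
    exact ⟨hQ2, hQ3⟩
  have hΛne : Λ.Nonempty := by
    obtain ⟨z, hz⟩ := Finset.nonempty_iff_ne_empty.mpr hE0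
    obtain ⟨v, hv, _⟩ := Finset.mem_biUnion.mp (hsub hz)
    exact ⟨v, hv⟩
  obtain ⟨v, hv, hmax⟩ := Finset.exists_max_image Λ (fun v => (H v).card) hΛne
  refine ⟨R v, Polynomial.mem_degreeLT.mpr (hR1 v), ?_⟩
  have hc : E.card ≤ Λ.card * (H v).card :=
    (Finset.card_le_card hsub).trans (Finset.card_biUnion_le_card_mul _ _ _ hmax)
  calc (E.card : ℝ) ≤ Λ.card * (H v).card := by exact_mod_cast hc
    _ ≤ Lstar * (H v).card := by gcongr

theorem stmt10 {F : Type*} [Field F] [Fintype F] (D : Finset F) (hD : D.Nonempty)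
    (d : ℕ) (hd : 0 < d) (δ ε : ℝ) (hδ : 0 < δ) (hε : 0 < ε) (hε3 : ε < 1/3)
    (Lstar : ℝ)
    (hL : ∀ w : ↥D → F,
      (({v : ↥D → F |
          (∃ Q : Polynomial F, Q.degree < (d : ℕ) ∧ ∀ y : ↥D, v y = Q.eval (y : F)) ∧
          relDist w v < δ}).ncard : ℝ) ≤ Lstar)
    (u ustar : ↥D → F) (B : F → Polynomial F) (hB : ∀ z, (B z).degree ≤ 1)
    (hpr : max (2 * Lstar * ((d / Fintype.card F : ℝ) + ε) ^ ((1:ℝ)/3))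
        (4 / (ε ^ 2 * Fintype.card F))
      ≤ (({p : F × F | ∃ Q : Polynomial F, Q.degree < (d : ℕ) ∧
            Q.eval p.2 = (B p.2).eval p.1 ∧
            relDist (fun y => ustar y + p.1 * u y) (fun y : ↥D => Q.eval (y : F)) < δ}).ncard : ℝ)
          / (Fintype.card F : ℝ) ^ 2) :
    ∃ Qv Qvstar : Polynomial F, Qv.degree < (d : ℕ) ∧ Qvstar.degree < (d : ℕ) ∧
      (∃ C : Finset ↥D, ((1 - δ - ε) * D.card ≤ (C.card : ℝ)) ∧
        (∀ y ∈ C, u y = Qv.eval (y : F)) ∧ (∀ y ∈ C, ustar y = Qvstar.eval (y : F))) ∧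
      relDist u (fun y : ↥D => Qv.eval (y : F)) ≤ δ + ε ∧
      relDist ustar (fun y : ↥D => Qvstar.eval (y : F)) ≤ δ + ε := by
  by_cases hdD : D.card ≤ d
  · obtain ⟨Q, hQ, hQu⟩ := rs_interp D d hdD u
    obtain ⟨Q', hQ', hQu'⟩ := rs_interp D d hdD ustar
    have hC : (1 - (δ + ε)) * D.card ≤ ((Finset.univ : Finset ↥D).card : ℝ) := by
      rw [Finset.card_univ, Fintype.card_coe]
      have : (0:ℝ) ≤ D.card := by positivity
      nlinarith
    refine ⟨Q, Q', hQ, hQ', ⟨Finset.univ, ?_, fun y _ => hQu y, fun y _ => hQu' y⟩, ?_, ?_⟩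
    · rw [sub_sub]; exact hC
    · exact rs_dist D hD _ _ _ Finset.univ hC fun y _ => hQu y
    · exact rs_dist D hD _ _ _ Finset.univ hC fun y _ => hQu' y
  have hdD' : d ≤ D.card := by omega
  have hq : (0:ℝ) < Fintype.card F := by exact_mod_cast Fintype.card_pos
  set q : ℝ := (Fintype.card F : ℝ) with hqdef
  have hL1 : (0:ℝ) < Lstar := by
    refine lt_of_lt_of_le ?_ (hL 0)
    have : 0 < ({v : ↥D → F |
          (∃ Q : Polynomial F, Q.degree < (d : ℕ) ∧ ∀ y : ↥D, v y = Q.eval (y : F)) ∧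
          relDist 0 v < δ}).ncard := by
      rw [Set.ncard_pos (Set.toFinite _)]
      refine ⟨0, ⟨0, by simp, by simp⟩, ?_⟩
      simpa [relDist] using hδ
    exact_mod_cast this
  have hch := fun x : F => rs_choose D d hdD' δ Lstar (fun y => ustar y + x * u y)
    (hL _) (fun z => (B z).eval x)
  choose P hP1 hP2 using hch
  let G : F → Finset F := fun x => Finset.univ.filter fun z => (P x).eval z = (B z).eval x ∧
        relDist (fun y => ustar y + x * u y) (fun y : ↥D => (P x).eval (y : F)) < δ
  set M : ℝ := (({p : F × F | ∃ Q : Polynomial F, Q.degree < (d : ℕ) ∧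
            Q.eval p.2 = (B p.2).eval p.1 ∧
            relDist (fun y => ustar y + p.1 * u y) (fun y : ↥D => Q.eval (y : F)) < δ}).ncard : ℝ)
    with hM
  have hMsum : M = ∑ x : F, ((Finset.univ.filter fun z => ∃ Q : Polynomial F, Q.degree < (d : ℕ) ∧
            Q.eval z = (B z).eval x ∧
            relDist (fun y => ustar y + x * u y) (fun y : ↥D => Q.eval (y : F)) < δ).card : ℝ) := by
    rw [hM, Set.ncard_eq_toFinset_card', Set.toFinset_ofPred, ← Finset.sum_boole,
      ← Finset.univ_product_univ, Finset.sum_product]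
    refine Finset.sum_congr rfl fun x _ => ?_
    rw [Finset.sum_boole]
  have hMN : M ≤ Lstar * ∑ z : F, ∑ x : F, (if z ∈ G x then (1:ℝ) else 0) := by
    rw [hMsum, Finset.sum_comm, Finset.mul_sum]
    refine Finset.sum_le_sum fun x _ => (hP2 x).trans (le_of_eq ?_)
    rw [Finset.sum_boole, Finset.filter_univ_mem]
  have hMq : M ≤ q ^ 2 := by
    rw [hM, hqdef]
    have := Set.ncard_le_card {p : F × F | ∃ Q : Polynomial F, Q.degree < (d : ℕ) ∧
            Q.eval p.2 = (B p.2).eval p.1 ∧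
            relDist (fun y => ustar y + p.1 * u y) (fun y : ↥D => Q.eval (y : F)) < δ}
    rw [Nat.card_eq_fintype_card, Fintype.card_prod, ← sq] at this
    exact_mod_cast this
  obtain ⟨hpr1, hpr2⟩ := max_le_iff.mp hpr
  have hε2q : 4 ≤ ε ^ 2 * q := by
    have h1 : M / q ^ 2 ≤ 1 := by rw [div_le_one (by positivity)]; exact hMq
    have h2 := hpr2.trans h1
    rwa [div_le_one (by positivity)] at h2
  set N : ℝ := ∑ z : F, ∑ x : F, (if z ∈ G x then (1:ℝ) else 0) with hN
  set t : ℝ := ((d / q : ℝ) + ε) ^ ((1:ℝ)/3) with ht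
  have ht0 : 0 ≤ t := by positivity
  have ht3 : t ^ 3 = d / q + ε := by
    rw [ht, ← Real.rpow_natCast, ← Real.rpow_mul (by positivity)]
    norm_num
  have hNt : 2 * t * q ^ 2 ≤ N := by
    rw [le_div_iff₀ (by positivity)] at hpr1
    have : Lstar * (2 * t * q ^ 2) ≤ Lstar * N := by linarith
    exact le_of_mul_le_mul_left this hL1
  have hT : 8 * ((d / q : ℝ) + ε) * q ^ 4
      ≤ ∑ z : F, (∑ x : F, (if z ∈ G x then (1:ℝ) else 0)) ^ 3 := by
    have hJ : N ^ 3 / q ^ 2 ≤ ∑ z : F, (∑ x : F, (if z ∈ G x then (1:ℝ) else 0)) ^ 3 := by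
      have := pow_sum_div_card_le_sum_pow (s := (Finset.univ : Finset F))
        (f := fun z => ∑ x : F, (if z ∈ G x then (1:ℝ) else 0))
        (fun z _ => Finset.sum_nonneg fun x _ => by split_ifs <;> norm_num) 2
      rwa [Finset.card_univ] at this
    have h1 : (2 * t * q ^ 2) ^ 3 ≤ N ^ 3 := by gcongr
    have h2 : 8 * ((d / q : ℝ) + ε) * q ^ 4 = (2 * t * q ^ 2) ^ 3 / q ^ 2 := by
      rw [← ht3]; field_simp; ring
    rw [h2]
    refine le_trans ?_ hJ
    gcongr
  obtain ⟨Q, Q', hQ, hQ', S, hS, hSx⟩ := rs_collinear d hd ε hε B hB P hP1 G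
    (fun x z hz => (Finset.mem_filter.mp hz).2.1) hT
  have hS1 : 1 ≤ ε * S.card := by
    have : ε * (ε * q) ≤ ε * S.card := by gcongr
    nlinarith
  have hA := rs_agree D hD δ ε u ustar (fun y => Q.eval (y : F)) (fun y => Q'.eval (y : F)) S hS1 (by
    intro x hx
    obtain ⟨⟨z, hz⟩, hPx⟩ := hSx x hx
    have := (Finset.mem_filter.mp hz).2.2
    rw [hPx] at this
    simpa using this)
  have hA' := hA
  rw [sub_sub] at hA'
  refine ⟨Q, Q', Polynomial.mem_degreeLT.mp hQ, Polynomial.mem_degreeLT.mp hQ', ⟨_, hA, ?_, ?_⟩,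
    rs_dist D hD _ _ _ _ hA' ?_, rs_dist D hD _ _ _ _ hA' ?_⟩
  · exact fun y hy => (Finset.mem_filter.mp hy).2.1
  · exact fun y hy => (Finset.mem_filter.mp hy).2.2
  · exact fun y hy => (Finset.mem_filter.mp hy).2.1
  · exact fun y hy => (Finset.mem_filter.mp hy).2.2
end
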